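/- arXiv:1210.8390 — 2 statements merged into one kernel-verified Lean document; each statement's English description precedes it below -/
import Mathlib

section
/- Let g = (g_1, …, g_d) and f = (f_1, …, f_d) be vectors in ℝ^d with all coordinates strictly positive, and let C_g denote the convex hull of the origin together with the truncations g^1, …, g^d of g. Then f ∈ C_g if and only if f_1 ≤ g_1 and f_i · g_j ≤ f_j · g_i for all 1 ≤ j < i ≤ d. -/
/-- The `k`-truncation of a vector `g ∈ ℝ^d`: the first `k` coordinates agree with
those of `g`, the remaining coordinates are `0`. (Coordinates are numbered `1, …, d`,
so the `i`-th entry of the vector, `i : Fin d`, is coordinate number `i + 1`.) -/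
def trunc {d : ℕ} (g : Fin d → ℝ) (k : ℕ) : Fin d → ℝ :=
  fun i => if (i : ℕ) + 1 ≤ k then g i else 0

theorem aux_sum (R : ℕ → ℝ) (c : ℝ) (i m : ℕ) :
    ∑ k ∈ Finset.range m, (R k - R (k+1)) * (if i + 1 ≤ k then c else 0)
      = if i + 1 ≤ m then (R (i+1) - R m) * c else 0 := by
  induction m with
  | zero => simp
  | succ m ih =>
    rw [Finset.sum_range_succ, ih]
    by_cases h : i + 1 ≤ m
    · rw [if_pos h, if_pos h, if_pos (by omega)]; ring
    · rw [if_neg h, if_neg h]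
      by_cases h' : i + 1 ≤ m + 1
      · have : i = m := by omega
        subst this
        simp
      · rw [if_neg h']; simp

/-- **Thales' Lemma.** Let `g` and `f` be vectors in `ℝ^d` with strictly positive
coordinates, and let `C_g` be the convex hull of the origin together with the
truncations `g^1, …, g^d`. Then `f ∈ C_g` iff `f₁ ≤ g₁` and `fᵢ gⱼ ≤ fⱼ gᵢ` for all
`1 ≤ j < i ≤ d`. -/
theorem thales_lemma (d : ℕ) (hd : 0 < d) (g f : Fin d → ℝ)
    (hg : ∀ i, 0 < g i) (hf : ∀ i, 0 < f i) :
    f ∈ convexHull ℝ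
        ({0} ∪ {x : Fin d → ℝ | ∃ k, 1 ≤ k ∧ k ≤ d ∧ x = trunc g k}) ↔
      f ⟨0, hd⟩ ≤ g ⟨0, hd⟩ ∧ ∀ i j : Fin d, j < i → f i * g j ≤ f j * g i := by
  constructor
  · intro h
    have hc : Convex ℝ {x : Fin d → ℝ | x ⟨0, hd⟩ ≤ g ⟨0, hd⟩ ∧
        ∀ i j : Fin d, j < i → x i * g j ≤ x j * g i} := by
      rintro x ⟨hx1, hx2⟩ y ⟨hy1, hy2⟩ a b ha hb hab
      refine ⟨?_, fun i j hij => ?_⟩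
      · simp only [Pi.add_apply, Pi.smul_apply, smul_eq_mul]
        have e : g ⟨0, hd⟩ = a * g ⟨0, hd⟩ + b * g ⟨0, hd⟩ := by rw [← add_mul, hab, one_mul]
        rw [e]
        exact add_le_add (mul_le_mul_of_nonneg_left hx1 ha) (mul_le_mul_of_nonneg_left hy1 hb)
      · simp only [Pi.add_apply, Pi.smul_apply, smul_eq_mul]
        have h1 := mul_le_mul_of_nonneg_left (hx2 i j hij) ha
        have h2 := mul_le_mul_of_nonneg_left (hy2 i j hij) hb
        linarith
    refine convexHull_min ?_ hc h
    rintro x (hx | ⟨k, hk1, hk2, rfl⟩)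
    · rw [Set.mem_singleton_iff] at hx
      subst hx
      exact ⟨(hg _).le, fun i j _ => by simp⟩
    · refine ⟨?_, fun i j hij => ?_⟩
      · simp only [trunc]
        rw [if_pos (by simpa using hk1)]
      · have hij' : (j : ℕ) < i := hij
        simp only [trunc]
        by_cases hi : (i : ℕ) + 1 ≤ k
        · rw [if_pos hi, if_pos (by omega)]
          exact (mul_comm _ _).le
        · rw [if_neg hi, zero_mul]
          split_ifs
          · exact (mul_pos (hg _) (hg _)).le
          · simp
  · rintro ⟨h0, h⟩
    let R : ℕ → ℝ := fun n => match n with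
      | 0 => 1
      | n + 1 => if hn : n < d then f ⟨n, hn⟩ / g ⟨n, hn⟩ else 0
    have hR0 : R 0 = 1 := rfl
    have hRs : ∀ n (hn : n < d), R (n+1) = f ⟨n, hn⟩ / g ⟨n, hn⟩ := fun n hn => dif_pos hn
    have hRd : R (d+1) = 0 := dif_neg (lt_irrefl d)
    have hw : ∀ k ∈ Finset.range (d+1), 0 ≤ R k - R (k+1) := by
      intro k hk
      rw [Finset.mem_range] at hk
      rw [sub_nonneg]
      rcases k with _ | n
      · rw [hRs 0 hd, hR0, div_le_one (hg _)]
        exact h0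
      · have hn : n < d := by omega
        rw [hRs n hn]
        by_cases hn' : n + 1 < d
        · rw [hRs (n+1) hn', div_le_div_iff₀ (hg _) (hg _)]
          exact h _ _ (Fin.mk_lt_mk.2 (Nat.lt_succ_self n))
        · have : n + 1 = d := by omega
          rw [this, hRd]
          exact (div_pos (hf _) (hg _)).le
    have hs : ∑ k ∈ Finset.range (d+1), (R k - R (k+1)) = 1 := by
      rw [Finset.sum_range_sub', hRd, hR0, sub_zero]
    have hf' : f = ∑ k ∈ Finset.range (d+1), (R k - R (k+1)) • trunc g k := by
      funext i
      have hi := i.2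
      simp only [Finset.sum_apply, Pi.smul_apply, smul_eq_mul, trunc]
      rw [aux_sum, if_pos (by omega), hRd, hRs i hi, sub_zero]
      exact (div_mul_cancel₀ _ (hg i).ne').symm
    rw [hf']
    refine (convex_convexHull ℝ _).sum_mem hw hs fun k hk => subset_convexHull ℝ _ ?_
    rw [Finset.mem_range] at hk
    rcases Nat.eq_zero_or_pos k with rfl | hk'
    · left
      rw [Set.mem_singleton_iff]
      funext i
      simp [trunc]
    · exact Or.inr ⟨k, hk', by omega, rfl⟩
end

section
/- Let G be a finite simple graph, let u, v be distinct nonadjacent vertices of G, and let k ≥ 2. Writing q_k(H) for the ratio c_k(H)/c_{k-1}(H) (compared via cross-multiplication), either q_k(G_{u→v}) is strictly greater than q_k(G), or q_k(G_{v→u}) is strictly greater than q_k(G), or q_k(G_{u→v}) = q_k(G_{v→u}) = q_k(G). In particular, max with respect to cross-multiplied comparison of q_k(G_{u→v}) and q_k(G_{v→u}) is at least q_k(G): c_k(G) · c_{k-1}(G_{u→v}) ≤ c_k(G_{u→v}) · c_{k-1}(G) or c_k(G) · c_{k-1}(G_{v→u}) ≤ c_k(G_{v→u}) · c_{k-1}(G).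 -/
/-- The number of `k`-cliques of a graph `G`. -/
noncomputable def cliqueCount {V : Type*} (G : SimpleGraph V) (k : ℕ) : ℕ :=
  {s : Finset V | G.IsNClique k s}.ncard

/-- The graph `G_{u→v}`: delete all edges incident to `u` and join `u` to every
neighbor of `v` in `G`. -/
def redirect {V : Type*} (G : SimpleGraph V) (u v : V) : SimpleGraph V where
  Adj x y :=
    (x ≠ u ∧ y ≠ u ∧ G.Adj x y) ∨ (x = u ∧ y ≠ u ∧ G.Adj v y) ∨
      (y = u ∧ x ≠ u ∧ G.Adj v x)
  symm := by
    refine ⟨?_⟩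
    rintro x y (⟨h1, h2, h3⟩ | ⟨h1, h2, h3⟩ | ⟨h1, h2, h3⟩)
    · exact Or.inl ⟨h2, h1, h3.symm⟩
    · exact Or.inr (Or.inr ⟨h1, h2, h3⟩)
    · exact Or.inr (Or.inl ⟨h1, h2, h3⟩)
  loopless := by
    refine ⟨?_⟩
    rintro x (⟨h1, h2, h3⟩ | ⟨h1, h2, h3⟩ | ⟨h1, h2, h3⟩)
    · exact G.loopless.irrefl x h3
    · exact h2 h1
    · exact h2 h1

open Classical in
theorem redirect_adj_swap {V : Type*} (G : SimpleGraph V) (u v x y : V) (huv : u ≠ v)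
    (hx : x ≠ v) (hy : y ≠ v) :
    (redirect G u v).Adj x y ↔ G.Adj (Equiv.swap u v x) (Equiv.swap u v y) := by
  by_cases h1 : x = u
  · by_cases h2 : y = u
    · subst h1; subst h2; simp
    · subst h1
      rw [Equiv.swap_apply_left, Equiv.swap_apply_of_ne_of_ne h2 hy]
      simp [redirect, h2]
  · by_cases h2 : y = u
    · subst h2
      rw [Equiv.swap_apply_left, Equiv.swap_apply_of_ne_of_ne h1 hx]
      simp [redirect, h1, G.adj_comm]
    · rw [Equiv.swap_apply_of_ne_of_ne h1 hx, Equiv.swap_apply_of_ne_of_ne h2 hy]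
      simp [redirect, h1, h2]

open Classical in
theorem redirect_card_mem {V : Type*} (G : SimpleGraph V) (u v : V)
    (huv : u ≠ v) (hadj : ¬ G.Adj u v) (j : ℕ) :
    {s : Finset V | (redirect G u v).IsNClique j s ∧ u ∈ s}.ncard =
      {s : Finset V | G.IsNClique j s ∧ v ∈ s}.ncard := by
  have hinj : Function.Injective (fun s : Finset V => s.map (Equiv.swap u v).toEmbedding) :=
    Finset.map_injective _
  rw [← Set.ncard_image_of_injective _ hinj]
  congr 1
  ext t
  simp only [Set.mem_image, Set.mem_setOf_eq]
  constructor
  · rintro ⟨s, ⟨⟨hc, hn⟩, hu⟩, rfl⟩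
    have hv : ∀ x ∈ s, x ≠ v := by
      rintro x hx rfl
      have := hc hu hx huv
      simp [redirect, huv.symm] at this
    refine ⟨⟨?_, by simpa using hn⟩, ?_⟩
    · intro a ha b hb hab
      simp only [Finset.coe_map, Set.mem_image, Finset.mem_coe] at ha hb
      obtain ⟨x, hx, rfl⟩ := ha
      obtain ⟨y, hy, rfl⟩ := hb
      have hxy : x ≠ y := fun h => hab (by rw [h])
      exact (redirect_adj_swap G u v x y huv (hv x hx) (hv y hy)).1 (hc hx hy hxy)
    · rw [Finset.mem_map]
      exact ⟨u, hu, by simp⟩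
  · rintro ⟨⟨hc, hn⟩, hv⟩
    have hu : u ∉ t := fun h => hadj (hc h hv huv)
    refine ⟨t.map (Equiv.swap u v).toEmbedding, ⟨⟨?_, by simpa using hn⟩, ?_⟩, ?_⟩
    · intro a ha b hb hab
      simp only [Finset.coe_map, Set.mem_image, Finset.mem_coe] at ha hb
      obtain ⟨x, hx, rfl⟩ := ha
      obtain ⟨y, hy, rfl⟩ := hb
      have hxy : x ≠ y := fun h => hab (by rw [h])
      have key : ∀ z ∈ t, Equiv.swap u v z ≠ v := by
        intro z hz h
        have h' := congrArg (Equiv.swap u v) h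
        rw [Equiv.swap_apply_right, Equiv.swap_apply_self] at h'
        exact hu (h' ▸ hz)
      refine (redirect_adj_swap G u v _ _ huv (key x hx) (key y hy)).2 ?_
      simpa using hc hx hy hxy
    · rw [Finset.mem_map]
      exact ⟨v, hv, by simp⟩
    · ext z
      simp [Finset.mem_map]

theorem redirect_card_not_mem {V : Type*} (G : SimpleGraph V) (u v : V) (j : ℕ) :
    {s : Finset V | (redirect G u v).IsNClique j s ∧ u ∉ s} =
      {s : Finset V | G.IsNClique j s ∧ u ∉ s} := by
  ext s
  simp only [Set.mem_setOf_eq, SimpleGraph.isNClique_iff]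
  refine and_congr_left fun hu => and_congr_left fun _ => ?_
  have hne : ∀ x ∈ s, x ≠ u := fun x hx h => hu (h ▸ hx)
  constructor
  · intro hc a ha b hb hab
    have := hc ha hb hab
    simpa [redirect, hne a ha, hne b hb] using this
  · intro hc a ha b hb hab
    have := hc ha hb hab
    simpa [redirect, hne a ha, hne b hb] using this

theorem cliqueCount_split {V : Type*} [Fintype V] (G : SimpleGraph V) (u : V) (j : ℕ) :
    cliqueCount G j = {s : Finset V | G.IsNClique j s ∧ u ∈ s}.ncard +
      {s : Finset V | G.IsNClique j s ∧ u ∉ s}.ncard := by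
  rw [← Set.ncard_union_eq _ (Set.toFinite _) (Set.toFinite _)]
  · unfold cliqueCount
    congr 1
    ext s
    simp only [Set.mem_setOf_eq, Set.mem_union]
    tauto
  · rw [Set.disjoint_left]
    rintro s ⟨_, h⟩ ⟨_, h'⟩
    exact h' h

theorem redirect_sum {V : Type*} [Fintype V] (G : SimpleGraph V) (u v : V)
    (huv : u ≠ v) (hadj : ¬ G.Adj u v) (j : ℕ) :
    cliqueCount (redirect G u v) j + cliqueCount (redirect G v u) j = 2 * cliqueCount G j := by
  have h1 := cliqueCount_split G u j
  have h2 := cliqueCount_split G v j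
  have h3 := cliqueCount_split (redirect G u v) u j
  have h4 := cliqueCount_split (redirect G v u) v j
  rw [redirect_card_mem G u v huv hadj, redirect_card_not_mem] at h3
  rw [redirect_card_mem G v u huv.symm (fun h => hadj h.symm), redirect_card_not_mem] at h4
  omega

/-- With `q_k(H) = c_k(H)/c_{k-1}(H)` compared via cross-multiplication: for distinct
nonadjacent vertices `u, v` of a finite graph `G` and `k ≥ 2`, either
`q_k(G_{u→v}) > q_k(G)`, or `q_k(G_{v→u}) > q_k(G)`, or
`q_k(G_{u→v}) = q_k(G_{v→u}) = q_k(G)`.  In particular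
`q_k(G_{u→v}) ≥ q_k(G)` or `q_k(G_{v→u}) ≥ q_k(G)`. -/
theorem redirect_ratio_max {V : Type*} [Fintype V] (G : SimpleGraph V) (u v : V)
    (huv : u ≠ v) (hadj : ¬ G.Adj u v) (k : ℕ) (hk : 2 ≤ k) :
    (cliqueCount G k * cliqueCount (redirect G u v) (k - 1) <
        cliqueCount (redirect G u v) k * cliqueCount G (k - 1) ∨
      cliqueCount G k * cliqueCount (redirect G v u) (k - 1) <
        cliqueCount (redirect G v u) k * cliqueCount G (k - 1) ∨
      (cliqueCount (redirect G u v) k * cliqueCount G (k - 1) =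
          cliqueCount G k * cliqueCount (redirect G u v) (k - 1) ∧
        cliqueCount (redirect G v u) k * cliqueCount G (k - 1) =
          cliqueCount G k * cliqueCount (redirect G v u) (k - 1))) ∧
    (cliqueCount G k * cliqueCount (redirect G u v) (k - 1) ≤
        cliqueCount (redirect G u v) k * cliqueCount G (k - 1) ∨
      cliqueCount G k * cliqueCount (redirect G v u) (k - 1) ≤
        cliqueCount (redirect G v u) k * cliqueCount G (k - 1)) := by
  have hA := redirect_sum G u v huv hadj k
  have hB := redirect_sum G u v huv hadj (k - 1)
  generalize cliqueCount (redirect G u v) k = a1 at *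
  generalize cliqueCount (redirect G v u) k = a2 at *
  generalize cliqueCount (redirect G u v) (k - 1) = b1 at *
  generalize cliqueCount (redirect G v u) (k - 1) = b2 at *
  generalize cliqueCount G k = a at *
  generalize cliqueCount G (k - 1) = b at *
  have key : a1 * b + a2 * b = a * b1 + a * b2 := by
    rw [← add_mul, ← mul_add, hA, hB]; ring
  omega
end
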